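/- arXiv:1412.4376 — 2 statements merged into one kernel-verified Lean document; each statement's English description precedes it below -/
import Mathlib

section
/- Let α > 1 and let u : (0,1) → ℝ be differentiable with u ∈ L²_x and D_{x,α}u ∈ L²_x. Then there is a constant C, depending only on α, such that ‖x^{−1} u‖_{L²_x} ≤ C ‖D_{x,α}u‖_{L²_x} and ‖u'‖_{L²_x} ≤ C ‖D_{x,α}u‖_{L²_x}. -/
open MeasureTheory Set
open scoped ENNReal

/-- The integral operator `(A_α φ)(x) = x^{−α} ∫₀ˣ y^α φ(y) dy`. -/
noncomputable def Aa (α : ℝ) (φ : ℝ → ℝ) : ℝ → ℝ :=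
  fun x => x ^ (-α) * ∫ y in Ioo (0:ℝ) x, y ^ α * φ y

/-- The integral operator `(A_α^* φ)(x) = x^{α−1} ∫ₓ¹ y^{1−α} φ(y) dy`. -/
noncomputable def Astar (α : ℝ) (φ : ℝ → ℝ) : ℝ → ℝ :=
  fun x => x ^ (α - 1) * ∫ y in Ioo x (1:ℝ), y ^ (1 - α) * φ y

/-- The twisted derivative `D_{x,α} φ = φ' + (α/x) φ`. -/
noncomputable def Dtw (α : ℝ) (φ : ℝ → ℝ) : ℝ → ℝ :=
  fun x => deriv φ x + (α / x) * φ x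

/-- The formal adjoint `D*_{x,α} φ = −φ' + ((α−1)/x) φ`. -/
noncomputable def Dstar (α : ℝ) (φ : ℝ → ℝ) : ℝ → ℝ :=
  fun x => -deriv φ x + ((α - 1) / x) * φ x

/-- Membership in `L²_x = L²((0,1), x dx)`. -/
def MemL2x (φ : ℝ → ℝ) : Prop := IntegrableOn (fun x => φ x ^ 2 * x) (Ioo (0:ℝ) 1)

/-- The `L²_x` norm, `‖φ‖ = (∫₀¹ φ(x)² x dx)^{1/2}`. -/
noncomputable def L2xNorm (φ : ℝ → ℝ) : ℝ := Real.sqrt (∫ x in Ioo (0:ℝ) 1, φ x ^ 2 * x)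

/-- The `L²_x` norm as an extended nonnegative real, `(∫₀¹ φ(x)² x dx)^{1/2}`. -/
noncomputable def eL2x (φ : ℝ → ℝ) : ℝ≥0∞ :=
  (∫⁻ x in Ioo (0:ℝ) 1, ENNReal.ofReal (φ x ^ 2 * x)) ^ (1/2 : ℝ)

open Filter Topology in
lemma core_aux (α : ℝ) (u : ℝ → ℝ) (n : ℕ) (hs : 0 < 2 * α - n)
    (hu : ∀ x ∈ Ioo (0:ℝ) 1, DifferentiableAt ℝ u x)
    (hg : IntegrableOn (fun x => Dtw α u x ^ 2 * x) (Ioo (0:ℝ) 1))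
    (a b : ℝ) (ha : 0 < a) (hab : a ≤ b) (hb : b < 1) :
    (2 * α - n) / 2 * (∫ x in a..b, x ^ n * (u x ^ 2 / x)) ≤
      2 / (2 * α - n) * (∫ x in a..b, x ^ n * (Dtw α u x ^ 2 * x)) + a ^ n * u a ^ 2 := by
  set s := 2 * α - n with hsdef
  have hsub : Icc a b ⊆ Ioo (0:ℝ) 1 := fun x hx => ⟨ha.trans_le hx.1, hx.2.trans_lt hb⟩
  have hcu : ContinuousOn u (Icc a b) := fun x hx => (hu x (hsub hx)).continuousAt.continuousWithinAt
  have hc1 : ContinuousOn (fun x => x ^ n * (u x ^ 2 / x)) (Icc a b) := by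
    refine (by fun_prop : ContinuousOn (fun x : ℝ => x ^ n) _).mul ((hcu.pow 2).div continuousOn_id ?_)
    intro x hx; exact (hsub hx).1.ne'
  have hi1 : IntegrableOn (fun x => x ^ n * (u x ^ 2 / x)) (Icc a b) := hc1.integrableOn_Icc
  have hi2 : IntegrableOn (fun x => x ^ n * (Dtw α u x ^ 2 * x)) (Icc a b) :=
    (hg.mono_set hsub).continuousOn_mul (by fun_prop) isCompact_Icc
  have hi3 : IntegrableOn (fun x => 2 / s * (x ^ n * (Dtw α u x ^ 2 * x)) -
      s / 2 * (x ^ n * (u x ^ 2 / x))) (Icc a b) := by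
    unfold IntegrableOn
    exact Integrable.sub (hi2.const_mul (2 / s)) (hi1.const_mul (s / 2))
  have key := intervalIntegral.sub_le_integral_of_hasDeriv_right_of_le (g := fun x => x ^ n * u x ^ 2)
    (g' := fun x => (n * x ^ (n-1)) * u x ^ 2 + x ^ n * (2 * u x * deriv u x))
    (φ := fun x => 2 / s * (x ^ n * (Dtw α u x ^ 2 * x)) - s / 2 * (x ^ n * (u x ^ 2 / x)))
    hab ((by fun_prop : ContinuousOn (fun x : ℝ => x ^ n) _).mul (hcu.pow 2)) ?_
    hi3 ?_
  · rw [intervalIntegral.integral_sub, intervalIntegral.integral_const_mul,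
      intervalIntegral.integral_const_mul] at key
    · have : 0 ≤ b ^ n * u b ^ 2 := by have := ha.trans_le hab; positivity
      linarith
    · exact ((intervalIntegrable_iff_integrableOn_Icc_of_le hab).2 hi2).const_mul _
    · exact ((intervalIntegrable_iff_integrableOn_Icc_of_le hab).2 hi1).const_mul _
  · intro x hx
    have h1 := (hu x (hsub (Ioo_subset_Icc_self hx))).hasDerivAt
    have h2 := (hasDerivAt_pow n x).mul (h1.pow 2)
    refine HasDerivAt.hasDerivWithinAt ?_
    refine h2.congr_deriv ?_
    simp [mul_assoc]
  · intro x hx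
    have hx0 : 0 < x := (hsub (Ioo_subset_Icc_self hx)).1
    have hd : deriv u x = Dtw α u x - α / x * u x := by simp [Dtw]
    have hn : (n : ℝ) * x ^ (n - 1) = n * x ^ n / x := by
      rcases n with _ | k
      · simp
      · field_simp; simp [pow_succ]
    have hα : α = (s + n) / 2 := by rw [hsdef]; ring
    simp only [hd, hn]
    have e : 2 / s * (x ^ n * (Dtw α u x ^ 2 * x)) - s / 2 * (x ^ n * (u x ^ 2 / x)) -
        (n * x ^ n / x * u x ^ 2 + x ^ n * (2 * u x * (Dtw α u x - α / x * u x)))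
        = x ^ n * (s * u x - 2 * x * Dtw α u x) ^ 2 / (2 * s * x) := by
      generalize Dtw α u x = f
      rw [hα]
      clear_value s
      field_simp
      ring
    have : 0 ≤ x ^ n * (s * u x - 2 * x * Dtw α u x) ^ 2 / (2 * s * x) := by positivity
    linarith

lemma small_aux1 (u : ℝ → ℝ) (hh : IntegrableOn (fun x => u x ^ 2 * x) (Ioo (0:ℝ) 1))
    (η δ : ℝ) (hη : 0 < η) (hδ : 0 < δ) (hδ1 : δ ≤ 1) : ∃ a, 0 < a ∧ a < δ ∧ a ^ 2 * u a ^ 2 < η := by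
  by_contra! hcon
  have h1 : IntegrableOn (fun x : ℝ => x⁻¹) (Ioo 0 δ) := by
    have := (hh.mono_set (Ioo_subset_Ioo_right hδ1)).const_mul (η⁻¹)
    refine Integrable.mono' this (by fun_prop) ?_
    filter_upwards [ae_restrict_mem measurableSet_Ioo] with x hx
    have hx0 := hx.1
    have := hcon x hx.1 hx.2
    rw [Real.norm_of_nonneg (by positivity)]
    rw [inv_le_iff_one_le_mul₀ hx0]
    calc 1 = η⁻¹ * η := by field_simp
      _ ≤ η⁻¹ * (x ^ 2 * u x ^ 2) := by gcongr
      _ = _ := by ring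
  rw [← intervalIntegrable_iff_integrableOn_Ioo_of_le hδ.le, intervalIntegrable_inv_iff] at h1
  rcases h1 with h | h
  · exact hδ.ne h
  · exact h left_mem_uIcc

lemma small_aux2 (α : ℝ) (hα : 1 < α) (u : ℝ → ℝ)
    (hu : ∀ x ∈ Ioo (0:ℝ) 1, DifferentiableAt ℝ u x)
    (hh : IntegrableOn (fun x => u x ^ 2 * x) (Ioo (0:ℝ) 1))
    (hg : IntegrableOn (fun x => Dtw α u x ^ 2 * x) (Ioo (0:ℝ) 1))
    (ε δ : ℝ) (hε : 0 < ε) (hδ : 0 < δ) (hδ1 : δ ≤ 1) : ∃ a, 0 < a ∧ a < δ ∧ u a ^ 2 < ε := by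
  by_contra! hcon
  obtain ⟨s, hs⟩ : ∃ s, s = 2 * α - 2 := ⟨_, rfl⟩
  have hs0 : 0 < s := by linarith
  -- the primitive of `g` is small near zero
  have hg' : IntegrableOn (fun x => Dtw α u x ^ 2 * x) (Icc (0:ℝ) 1) :=
    (integrableOn_Icc_iff_integrableOn_Ioo (by simp) (by simp)).2 hg
  have hG := intervalIntegral.continuousOn_primitive hg' 0 (by simp)
  obtain ⟨θ, hθ⟩ : ∃ θ, θ = s ^ 2 * ε / 64 := ⟨_, rfl⟩
  have hθ0 : 0 < θ := by rw [hθ]; positivity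
  obtain ⟨ρ, hρ, hρG⟩ := Metric.continuousWithinAt_iff.1 hG θ hθ0
  obtain ⟨b, hb⟩ : ∃ b, b = min δ ρ / 2 := ⟨_, rfl⟩
  have hm : 0 < min δ ρ := lt_min hδ hρ
  have hb0 : 0 < b := by linarith
  have hbδ : b < δ := by have := min_le_left δ ρ; linarith
  have hbρ : b < ρ := by have := min_le_right δ ρ; linarith
  have hb1 : b < 1 := by linarith
  have hGb : (∫ x in Ioc 0 b, Dtw α u x ^ 2 * x) < θ := by
    have := hρG (x := b) ⟨hb0.le, hb1.le⟩ (by simpa [abs_of_pos hb0] using hbρ)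
    simp only [Ioc_self, Measure.restrict_empty, integral_zero_measure, dist_zero_right,
      Real.norm_eq_abs] at this
    exact (le_abs_self _).trans_lt this
  obtain ⟨a, ha0, hab, haη⟩ := small_aux1 u hh (s * ε * b ^ 2 / 32) (b / 2) (by positivity) (by linarith)
    (by linarith)
  have hab' : a ≤ b := by linarith
  have hsub : Icc a b ⊆ Ioo (0:ℝ) 1 := fun x hx => ⟨ha0.trans_le hx.1, hx.2.trans_lt hb1⟩
  have hc := core_aux α u 2 (by push_cast; linarith) hu hg a b ha0 hab' hb1
  push_cast at hc
  rw [← hs] at hc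
  have hgab : IntervalIntegrable (fun x => Dtw α u x ^ 2 * x) volume a b :=
    (intervalIntegrable_iff_integrableOn_Icc_of_le hab').2 (hg.mono_set hsub)
  have hcu : ContinuousOn u (Icc a b) := fun x hx => (hu x (hsub hx)).continuousAt.continuousWithinAt
  have hlow : ε * ((b ^ 2 - a ^ 2) / 2) ≤ ∫ x in a..b, x ^ 2 * (u x ^ 2 / x) := by
    have : ε * ((b ^ 2 - a ^ 2) / 2) = ∫ x in a..b, ε * x := by
      rw [intervalIntegral.integral_const_mul, integral_id]
    rw [this]
    refine intervalIntegral.integral_mono_on hab' (by apply Continuous.intervalIntegrable; fun_prop) ?_ ?_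
    · refine ContinuousOn.intervalIntegrable_of_Icc hab' ?_
      refine (by fun_prop : ContinuousOn (fun x : ℝ => x ^ 2) _).mul ((hcu.pow 2).div continuousOn_id ?_)
      intro x hx; exact (hsub hx).1.ne'
    · intro x hx
      have hx0 := (hsub hx).1
      have := hcon x hx0 (hx.2.trans_lt hbδ)
      have e : x ^ 2 * (u x ^ 2 / x) = u x ^ 2 * x := by field_simp
      rw [e]; gcongr
  have hup : (∫ x in a..b, x ^ 2 * (Dtw α u x ^ 2 * x)) ≤ b ^ 2 * θ := by
    calc (∫ x in a..b, x ^ 2 * (Dtw α u x ^ 2 * x)) ≤ ∫ x in a..b, b ^ 2 * (Dtw α u x ^ 2 * x) := by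
          refine intervalIntegral.integral_mono_on hab' ?_ (hgab.const_mul _) ?_
          · exact hgab.continuousOn_mul (by fun_prop)
          · intro x hx
            have hx0 := (hsub hx).1
            have := hx.2
            gcongr
      _ = b ^ 2 * ∫ x in Ioc a b, (Dtw α u x ^ 2 * x) := by
          rw [intervalIntegral.integral_const_mul, intervalIntegral.integral_of_le hab']
      _ ≤ b ^ 2 * ∫ x in Ioc 0 b, (Dtw α u x ^ 2 * x) := by
          refine mul_le_mul_of_nonneg_left ?_ (by positivity)
          refine setIntegral_mono_set (hg.mono_set ?_) ?_ ?_
          · intro x hx; exact ⟨hx.1, hx.2.trans_lt hb1⟩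
          · filter_upwards [ae_restrict_mem measurableSet_Ioc] with x hx
            have := hx.1
            simp only [Pi.zero_apply]; positivity
          · exact (Ioc_subset_Ioc_left ha0.le).eventuallyLE
      _ ≤ _ := by gcongr
  have h1 : s / 2 * (ε * ((b ^ 2 - a ^ 2) / 2)) ≤ 2 / s * (b ^ 2 * θ) + s * ε * b ^ 2 / 32 := by
    calc _ ≤ s / 2 * ∫ x in a..b, x ^ 2 * (u x ^ 2 / x) := by gcongr
      _ ≤ _ := hc
      _ ≤ _ := by gcongr
  have h2 : 2 / s * (b ^ 2 * θ) = s * ε * b ^ 2 / 32 := by rw [hθ]; field_simp; ring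
  have h3 : a ^ 2 ≤ b ^ 2 / 4 := by nlinarith
  have h4 : 0 < s * ε * b ^ 2 := by positivity
  have h5 : s * ε * a ^ 2 ≤ s * ε * (b ^ 2 / 4) := by gcongr
  nlinarith

open Filter Topology in
lemma hardy_aux (α : ℝ) (hα : 1 < α) (u : ℝ → ℝ)
    (hu : ∀ x ∈ Ioo (0:ℝ) 1, DifferentiableAt ℝ u x)
    (hh : IntegrableOn (fun x => u x ^ 2 * x) (Ioo (0:ℝ) 1))
    (hg : IntegrableOn (fun x => Dtw α u x ^ 2 * x) (Ioo (0:ℝ) 1)) :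
    (∫⁻ x in Ioo (0:ℝ) 1, ENNReal.ofReal (u x ^ 2 / x)) ≤
      ENNReal.ofReal (1 / α ^ 2 * ∫ x in Ioo (0:ℝ) 1, Dtw α u x ^ 2 * x) := by
  have hα0 : 0 < α := by linarith
  choose a ha0 ha1 ha2 using fun k : ℕ => small_aux2 α hα u hu hh hg (1 / ((k:ℝ) + 1)) (1 / ((k:ℝ) + 2))
    (by positivity) (by positivity) (by rw [div_le_one (by positivity)]; linarith [(k.cast_nonneg : (0:ℝ) ≤ k)])
  have ht1 : Tendsto (fun k : ℕ => 1 / ((k:ℝ) + 1)) atTop (𝓝 0) := tendsto_one_div_add_atTop_nhds_zero_nat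
  have ht2 : Tendsto (fun k : ℕ => 1 / ((k:ℝ) + 2)) atTop (𝓝 0) := by
    have := (tendsto_add_atTop_iff_nat 1).2 ht1
    refine this.congr fun k => ?_
    push_cast; ring_nf
  have hta : Tendsto a atTop (𝓝 0) :=
    tendsto_of_tendsto_of_tendsto_of_le_of_le tendsto_const_nhds ht2 (fun k => (ha0 k).le) (fun k => (ha1 k).le)
  have htu : Tendsto (fun k => u (a k) ^ 2) atTop (𝓝 0) :=
    tendsto_of_tendsto_of_tendsto_of_le_of_le tendsto_const_nhds ht1 (fun k => sq_nonneg _) (fun k => (ha2 k).le)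
  have htb : Tendsto (fun k : ℕ => 1 - 1 / ((k:ℝ) + 2)) atTop (𝓝 1) := by
    simpa using ht2.const_sub 1
  have hcont : ContinuousOn (fun x => u x ^ 2 / x) (Ioo (0:ℝ) 1) :=
    ContinuousOn.div (ContinuousOn.pow (fun x hx => (hu x hx).continuousAt.continuousWithinAt) 2)
      continuousOn_id (fun x hx => hx.1.ne')
  have hcov := aecover_Ioo_of_Icc (μ := (volume : Measure ℝ)) hta htb
  have hL := hcov.lintegral_tendsto_of_nat (f := fun x => ENNReal.ofReal (u x ^ 2 / x))
    (hcont.aemeasurable measurableSet_Ioo).ennreal_ofReal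
  set F := ∫ x in Ioo (0:ℝ) 1, Dtw α u x ^ 2 * x with hF
  have hR : Tendsto (fun k => ENNReal.ofReal (1 / α ^ 2 * F + 1 / α * u (a k) ^ 2)) atTop
      (𝓝 (ENNReal.ofReal (1 / α ^ 2 * F))) := by
    refine (ENNReal.continuous_ofReal.tendsto _).comp ?_
    have := (htu.const_mul (1 / α)).const_add (1 / α ^ 2 * F)
    rwa [mul_zero, add_zero] at this
  refine le_of_tendsto_of_tendsto' hL hR fun k => ?_
  obtain ⟨b, hb⟩ : ∃ b, b = 1 - 1 / ((k:ℝ) + 2) := ⟨_, rfl⟩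
  rw [← hb]
  have hk : 0 < 1 / ((k:ℝ) + 2) := by positivity
  have hk2 : 1 / ((k:ℝ) + 2) ≤ 1 / 2 := by gcongr; linarith [(k.cast_nonneg : (0:ℝ) ≤ k)]
  have hb1 : b < 1 := by linarith
  have hab : a k ≤ b := by linarith [ha1 k]
  have hsub : Icc (a k) b ⊆ Ioo (0:ℝ) 1 := fun x hx => ⟨(ha0 k).trans_le hx.1, hx.2.trans_lt hb1⟩
  have hc := core_aux α u 0 (by push_cast; linarith) hu hg (a k) b (ha0 k) hab hb1
  simp only [pow_zero, one_mul, Nat.cast_zero, sub_zero, intervalIntegral.integral_of_le hab,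
    ← integral_Icc_eq_integral_Ioc] at hc
  have hGF : (∫ x in Icc (a k) b, Dtw α u x ^ 2 * x) ≤ F := by
    refine setIntegral_mono_set hg ?_ hsub.eventuallyLE
    filter_upwards [ae_restrict_mem measurableSet_Ioo] with x hx
    have := hx.1
    simp only [Pi.zero_apply]; positivity
  rw [Measure.restrict_restrict measurableSet_Icc, inter_eq_left.2 hsub,
    ← ofReal_integral_eq_lintegral_ofReal]
  · refine ENNReal.ofReal_le_ofReal ?_
    set I := ∫ x in Icc (a k) b, u x ^ 2 / x
    have h1 : 2 * α / 2 * I ≤ 2 / (2 * α) * F + u (a k) ^ 2 := by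
      refine hc.trans ?_
      gcongr
    have h2 : I = 1 / α * (2 * α / 2 * I) := by field_simp
    rw [h2]
    calc _ ≤ 1 / α * (2 / (2 * α) * F + u (a k) ^ 2) := by gcongr
      _ = _ := by field_simp
  · exact (hcont.mono hsub).integrableOn_Icc
  · filter_upwards [ae_restrict_mem measurableSet_Icc] with x hx
    have := (hsub hx).1
    simp only [Pi.zero_apply]; positivity

lemma integrable_aux (φ : ℝ → ℝ) (hm : AEMeasurable φ (volume.restrict (Ioo (0:ℝ) 1)))
    (h : eL2x φ < ⊤) : IntegrableOn (fun x => φ x ^ 2 * x) (Ioo (0:ℝ) 1) := by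
  have h' : (∫⁻ x in Ioo (0:ℝ) 1, ENNReal.ofReal (φ x ^ 2 * x)) ≠ ⊤ := by
    intro h0
    rw [eL2x, h0, ENNReal.top_rpow_of_pos (by norm_num)] at h
    exact lt_irrefl _ h
  refine (lintegral_ofReal_ne_top_iff_integrable ?_ ?_).1 h'
  · exact ((hm.pow_const 2).mul aemeasurable_id).aestronglyMeasurable
  · filter_upwards [ae_restrict_mem measurableSet_Ioo] with x hx
    have := hx.1
    simp only [Pi.zero_apply]; positivity

lemma norm_aux (φ ψ : ℝ → ℝ)
    (h : (∫⁻ x in Ioo (0:ℝ) 1, ENNReal.ofReal (φ x ^ 2 * x)) ≤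
      4 * ∫⁻ x in Ioo (0:ℝ) 1, ENNReal.ofReal (ψ x ^ 2 * x)) :
    eL2x φ ≤ ENNReal.ofReal 2 * eL2x ψ := by
  unfold eL2x
  have e : ENNReal.ofReal 2 = (4 : ℝ≥0∞) ^ (1 / 2 : ℝ) := by
    rw [show (4 : ℝ≥0∞) = ENNReal.ofReal 4 by simp, ENNReal.ofReal_rpow_of_pos (by norm_num),
      ← Real.sqrt_eq_rpow, show (4:ℝ) = 2 ^ 2 by norm_num, Real.sqrt_sq (by norm_num)]
  rw [e, ← ENNReal.mul_rpow_of_nonneg _ _ (by norm_num)]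
  exact ENNReal.rpow_le_rpow h (by norm_num)

/-- For `α > 1` there is `C = C(α) > 0` such that for every `u` differentiable on `(0,1)`
with `u ∈ L²_x` and `D_{x,α} u ∈ L²_x` one has
`‖x⁻¹ u‖_{L²_x} ≤ C ‖D_{x,α} u‖_{L²_x}` and `‖u'‖_{L²_x} ≤ C ‖D_{x,α} u‖_{L²_x}`. -/
theorem H1_alpha_bounds (α : ℝ) (hα : 1 < α) :
    ∃ C : ℝ, 0 < C ∧ ∀ u : ℝ → ℝ,
      (∀ x ∈ Ioo (0:ℝ) 1, DifferentiableAt ℝ u x) →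
      eL2x u < ⊤ → eL2x (Dtw α u) < ⊤ →
      eL2x (fun x => u x / x) ≤ ENNReal.ofReal C * eL2x (Dtw α u) ∧
      eL2x (deriv u) ≤ ENNReal.ofReal C * eL2x (Dtw α u) := by
  refine ⟨2, by norm_num, fun u hu h1 h2 => ?_⟩
  have hα0 : 0 < α := by linarith
  have hcu : ContinuousOn u (Ioo (0:ℝ) 1) := fun x hx => (hu x hx).continuousAt.continuousWithinAt
  have hmu : AEMeasurable u (volume.restrict (Ioo (0:ℝ) 1)) := hcu.aemeasurable measurableSet_Ioo
  have hmD : AEMeasurable (Dtw α u) (volume.restrict (Ioo (0:ℝ) 1)) :=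
    (measurable_deriv u).aemeasurable.add (AEMeasurable.mul (by fun_prop) hmu)
  have hh := integrable_aux u hmu h1
  have hg := integrable_aux (Dtw α u) hmD h2
  have key := hardy_aux α hα u hu hh hg
  have hpos : 0 ≤ᵐ[volume.restrict (Ioo (0:ℝ) 1)] fun x => Dtw α u x ^ 2 * x := by
    filter_upwards [ae_restrict_mem measurableSet_Ioo] with x hx
    have := hx.1
    simp only [Pi.zero_apply]; positivity
  rw [ENNReal.ofReal_mul (by positivity), ofReal_integral_eq_lintegral_ofReal hg hpos] at key
  have hα1 : 1 / α ^ 2 ≤ 1 := by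
    rw [div_le_one (by positivity)]; nlinarith
  constructor
  · apply norm_aux
    calc _ = ∫⁻ x in Ioo (0:ℝ) 1, ENNReal.ofReal (u x ^ 2 / x) := by
          refine setLIntegral_congr_fun measurableSet_Ioo fun x hx => ?_
          have := hx.1
          congr 1
          field_simp
      _ ≤ _ := key
      _ ≤ _ := by
          gcongr
          exact (ENNReal.ofReal_le_one.2 hα1).trans (by norm_num)
  · apply norm_aux
    have hm2 : AEMeasurable (fun x => ENNReal.ofReal (2 * (Dtw α u x ^ 2 * x)))
        (volume.restrict (Ioo (0:ℝ) 1)) :=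
      (((hmD.pow_const 2).mul aemeasurable_id).const_mul 2).ennreal_ofReal
    calc _ ≤ ∫⁻ x in Ioo (0:ℝ) 1, (ENNReal.ofReal (2 * (Dtw α u x ^ 2 * x)) +
            ENNReal.ofReal (2 * α ^ 2 * (u x ^ 2 / x))) := by
          refine setLIntegral_mono' measurableSet_Ioo fun x hx => ?_
          have hx0 := hx.1
          rw [← ENNReal.ofReal_add (by positivity) (by positivity)]
          refine ENNReal.ofReal_le_ofReal ?_
          have hd : deriv u x = Dtw α u x - α / x * u x := by simp [Dtw]
          rw [hd]
          have e : 2 * (Dtw α u x ^ 2 * x) + 2 * α ^ 2 * (u x ^ 2 / x) -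
              (Dtw α u x - α / x * u x) ^ 2 * x = (Dtw α u x + α / x * u x) ^ 2 * x := by
            field_simp
            ring
          have : 0 ≤ (Dtw α u x + α / x * u x) ^ 2 * x := by positivity
          linarith
      _ = 2 * (∫⁻ x in Ioo (0:ℝ) 1, ENNReal.ofReal (Dtw α u x ^ 2 * x)) +
          ENNReal.ofReal (2 * α ^ 2) * (∫⁻ x in Ioo (0:ℝ) 1, ENNReal.ofReal (u x ^ 2 / x)) := by
          rw [lintegral_add_left' hm2]
          have p1 : (0:ℝ) ≤ 2 * α ^ 2 := by positivity
          simp only [ENNReal.ofReal_mul p1, ENNReal.ofReal_mul (zero_le_two : (0:ℝ) ≤ 2),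
            ENNReal.ofReal_ofNat]
          rw [lintegral_const_mul' _ _ (by simp), lintegral_const_mul' _ _ (by finiteness)]
      _ ≤ 2 * (∫⁻ x in Ioo (0:ℝ) 1, ENNReal.ofReal (Dtw α u x ^ 2 * x)) +
          ENNReal.ofReal (2 * α ^ 2) * (ENNReal.ofReal (1 / α ^ 2) *
            (∫⁻ x in Ioo (0:ℝ) 1, ENNReal.ofReal (Dtw α u x ^ 2 * x))) := by gcongr
      _ = _ := by
          rw [← mul_assoc, ← ENNReal.ofReal_mul (by positivity),
            show 2 * α ^ 2 * (1 / α ^ 2) = 2 by field_simp, ENNReal.ofReal_ofNat, ← add_mul]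
          norm_num
end

section
/- Let α > 1 and let u ∈ C²((0,1)) be such that u, D_{x,α}u and D*_{x,α}D_{x,α}u all belong to L²_x. Then there is a constant C, depending only on α, such that ‖x^{−2} u‖_{L²_x} + ‖x^{−1} u'‖_{L²_x} + ‖u''‖_{L²_x} ≤ C ( ‖u‖_{L²_x} + ‖D_{x,α}u‖_{L²_x} + ‖D*_{x,α}D_{x,α}u‖_{L²_x} ). -/
open MeasureTheory Set
open scoped ENNReal

lemma aux_half (P : ℝ → ℝ) (B : ℝ) (hP : ContinuousOn P (Ioo (0:ℝ) 1))
    (hP0 : ∀ x ∈ Ioo (0:ℝ) 1, 0 ≤ P x)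
    (hB : ∀ a ∈ Ioo (0:ℝ) (1/2), ∫ x in a..(1/2), P x ≤ B) :
    IntegrableOn P (Ioc (0:ℝ) (1/2)) ∧ ∫ x in Ioc (0:ℝ) (1/2), P x ≤ B := by
  have hseq : ∀ n : ℕ, (1 / ((n:ℝ) + 3)) ∈ Ioo (0:ℝ) (1/2) := by
    intro n
    constructor
    · positivity
    · apply one_div_lt_one_div_of_lt <;> linarith [(Nat.cast_nonneg n : (0:ℝ) ≤ n)]
  have hlim : Filter.Tendsto (fun n : ℕ => 1 / ((n:ℝ) + 3)) Filter.atTop (nhds 0) := by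
    have := (tendsto_one_div_add_atTop_nhds_zero_nat (𝕜 := ℝ)).comp (Filter.tendsto_add_atTop_nat 2)
    refine this.congr fun n => ?_
    simp only [Function.comp]
    push_cast
    ring_nf
  have hint : ∀ n : ℕ, IntegrableOn P (Ioc (1 / ((n:ℝ) + 3)) (1/2)) := by
    intro n
    have h := hseq n
    refine IntegrableOn.mono_set (t := Icc (1 / ((n:ℝ) + 3)) (1/2)) ?_ Ioc_subset_Icc_self
    refine (hP.mono ?_).integrableOn_Icc
    intro x hx
    exact ⟨h.1.trans_le hx.1, hx.2.trans_lt (by norm_num)⟩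
  have hI : IntegrableOn P (Ioc (0:ℝ) (1/2)) := by
    refine integrableOn_Ioc_of_intervalIntegral_norm_bounded_left (I := B) hint hlim ?_
    refine Filter.Eventually.of_forall fun n => ?_
    have h := hseq n
    refine le_trans (le_of_eq ?_) (hB _ h)
    rw [intervalIntegral.integral_of_le h.2.le]
    refine setIntegral_congr_fun measurableSet_Ioc fun x hx => ?_
    exact Real.norm_of_nonneg (hP0 x ⟨h.1.trans hx.1, hx.2.trans_lt (by norm_num)⟩)
  refine ⟨hI, ?_⟩
  have hc := (aecover_Ioc_of_Ioc (μ := volume) hlim (tendsto_const_nhds (x := (1/2:ℝ)))).integral_tendsto_of_countably_generated hI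
  refine le_of_tendsto hc (Filter.Eventually.of_forall fun n => ?_)
  have h := hseq n
  refine le_trans (le_of_eq ?_) (hB _ h)
  rw [intervalIntegral.integral_of_le h.2.le, Measure.restrict_restrict measurableSet_Ioc]
  congr 2
  refine inter_eq_left.2 (Ioc_subset_Ioc_left h.1.le)

lemma aux_ftc (P Q G G' : ℝ → ℝ) (a b : ℝ) (ha : 0 < a) (hab : a ≤ b) (hb : b < 1)
    (hP : ContinuousOn P (Ioo (0:ℝ) 1))
    (hQ : IntegrableOn Q (Ioo (0:ℝ) 1)) (hQ0 : ∀ x ∈ Ioo (0:ℝ) 1, 0 ≤ Q x)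
    (hG : ∀ x ∈ Ioo (0:ℝ) 1, HasDerivAt G (G' x) x)
    (hle : ∀ x ∈ Ioo a b, P x - Q x ≤ G' x) :
    ∫ x in a..b, P x ≤ G b - G a + ∫ x in Ioo (0:ℝ) 1, Q x := by
  have hsub : Icc a b ⊆ Ioo (0:ℝ) 1 := fun x hx => ⟨ha.trans_le hx.1, hx.2.trans_lt hb⟩
  have hPi : IntegrableOn P (Icc a b) := (hP.mono hsub).integrableOn_Icc
  have hQi : IntegrableOn Q (Icc a b) := hQ.mono_set hsub
  have h1 := intervalIntegral.integral_le_sub_of_hasDeriv_right_of_le (g := G) (g' := G')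
    (φ := fun x => P x - Q x) hab
    (fun x hx => (hG x (hsub hx)).continuousAt.continuousWithinAt)
    (fun x hx => (hG x (hsub (Ioo_subset_Icc_self hx))).hasDerivWithinAt) (hPi.sub hQi) hle
  rw [intervalIntegral.integral_sub
    ((intervalIntegrable_iff_integrableOn_Icc_of_le hab).2 hPi)
    ((intervalIntegrable_iff_integrableOn_Icc_of_le hab).2 hQi)] at h1
  have h2 : ∫ x in a..b, Q x ≤ ∫ x in Ioo (0:ℝ) 1, Q x := by
    rw [intervalIntegral.integral_of_le hab]
    refine setIntegral_mono_set hQ ?_ (Ioc_subset_Icc_self.trans hsub).eventuallyLE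
    exact (ae_restrict_iff' measurableSet_Ioo).2 (Filter.Eventually.of_forall hQ0)
  linarith

lemma aux_core (P Q R G G' : ℝ → ℝ) (M : ℝ)
    (hP : ContinuousOn P (Ioo (0:ℝ) 1)) (hP0 : ∀ x ∈ Ioo (0:ℝ) 1, 0 ≤ P x)
    (hQ : IntegrableOn Q (Ioo (0:ℝ) 1)) (hQ0 : ∀ x ∈ Ioo (0:ℝ) 1, 0 ≤ Q x)
    (hR : IntegrableOn R (Ioo (0:ℝ) 1)) (hR0 : ∀ x ∈ Ioo (0:ℝ) 1, 0 ≤ R x)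
    (hG : ∀ x ∈ Ioo (0:ℝ) 1, HasDerivAt G (G' x) x)
    (hle : ∀ x ∈ Ioo (0:ℝ) (1/2), P x - Q x ≤ G' x)
    (hM : ∀ a ∈ Ioo (0:ℝ) (1/2), G (1/2) - G a ≤ M)
    (hPR : ∀ x ∈ Ioo (1/2:ℝ) 1, P x ≤ R x) :
    IntegrableOn P (Ioo (0:ℝ) 1) ∧
    ∫ x in Ioo (0:ℝ) 1, P x ≤ M + (∫ x in Ioo (0:ℝ) 1, Q x) + ∫ x in Ioo (0:ℝ) 1, R x := by
  obtain ⟨hI1, hb1⟩ := aux_half P (M + ∫ x in Ioo (0:ℝ) 1, Q x) hP hP0 (by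
    intro a ha
    have := aux_ftc P Q G G' a (1/2) ha.1 ha.2.le (by norm_num) hP hQ hQ0 hG
      (fun x hx => hle x ⟨ha.1.trans hx.1, hx.2⟩)
    linarith [hM a ha])
  have hsub : Ioo (1/2:ℝ) 1 ⊆ Ioo (0:ℝ) 1 := Ioo_subset_Ioo_left (by norm_num)
  have hI2 : IntegrableOn P (Ioo (1/2:ℝ) 1) := by
    refine Integrable.mono' (hR.mono_set hsub)
      ((hP.mono hsub).aestronglyMeasurable measurableSet_Ioo) ?_
    refine (ae_restrict_iff' measurableSet_Ioo).2 (Filter.Eventually.of_forall fun x hx => ?_)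
    rw [Real.norm_of_nonneg (hP0 x (hsub hx))]
    exact hPR x hx
  have hu : Ioo (0:ℝ) 1 = Ioc 0 (1/2) ∪ Ioo (1/2) 1 :=
    (Ioc_union_Ioo_eq_Ioo (by norm_num) (by norm_num)).symm
  refine ⟨by rw [hu]; exact hI1.union hI2, ?_⟩
  have h2 : ∫ x in Ioo (1/2:ℝ) 1, P x ≤ ∫ x in Ioo (0:ℝ) 1, R x := by
    refine (setIntegral_mono_on hI2 (hR.mono_set hsub) measurableSet_Ioo hPR).trans ?_
    refine setIntegral_mono_set hR ?_ hsub.eventuallyLE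
    exact (ae_restrict_iff' measurableSet_Ioo).2 (Filter.Eventually.of_forall hR0)
  have h3 : ∫ x in Ioo (0:ℝ) 1, P x = (∫ x in Ioc (0:ℝ) (1/2), P x) + ∫ x in Ioo (1/2:ℝ) 1, P x := by
    conv_lhs => rw [hu]
    refine setIntegral_union ?_ measurableSet_Ioo hI1 hI2
    rw [Set.disjoint_left]
    intro x hx hx'
    exact absurd hx.2 (not_le.2 hx'.1)
  linarith

lemma aux_small (u : ℝ → ℝ) (y : ℝ) (hy : y ∈ Ioo (0:ℝ) 1)
    (hU : IntegrableOn (fun x => u x ^ 2 * x) (Ioo (0:ℝ) 1)) (c : ℝ) (hc : 0 < c) :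
    ∃ a ∈ Ioo (0:ℝ) y, u a ^ 2 * a ^ 2 < c := by
  by_contra! h
  have hsub : Ioo (0:ℝ) y ⊆ Ioo 0 1 := Ioo_subset_Ioo_right hy.2.le
  have h1 : IntegrableOn (fun x : ℝ => x⁻¹) (Ioo 0 y) := by
    refine Integrable.mono' ((hU.mono_set hsub).const_mul c⁻¹)
      measurable_inv.aestronglyMeasurable ?_
    refine (ae_restrict_iff' measurableSet_Ioo).2 (Filter.Eventually.of_forall fun x hx => ?_)
    have hx0 : 0 < x := hx.1
    rw [Real.norm_of_nonneg (by positivity)]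
    have := h x hx
    rw [inv_mul_eq_div, le_div_iff₀ hc, inv_mul_le_iff₀ hx0]
    linarith
  have h2 : IntervalIntegrable (fun x : ℝ => x⁻¹) volume 0 y := by
    rw [intervalIntegrable_iff_integrableOn_Ioo_of_le hy.1.le]
    exact h1
  rw [intervalIntegrable_inv_iff] at h2
  rcases h2 with h2 | h2
  · exact hy.1.ne h2
  · exact h2 left_mem_uIcc

lemma aux_sq (g : ℝ → ℝ) (d x : ℝ) (h : HasDerivAt g d x) :
    HasDerivAt (fun y => g y ^ 2) (2 * g x * d) x := by
  simpa using h.fun_pow 2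

lemma aux_sqx (x : ℝ) : HasDerivAt (fun y : ℝ => y ^ 2) (2 * x) x := by
  simpa using hasDerivAt_pow 2 x

lemma aux_w (β : ℝ) (hβ : 0 < β) (w f : ℝ → ℝ)
    (hw : ∀ x ∈ Ioo (0:ℝ) 1, HasDerivAt w (β / x * w x - f x) x)
    (hW : IntegrableOn (fun x => w x ^ 2 * x) (Ioo (0:ℝ) 1))
    (hF : IntegrableOn (fun x => f x ^ 2 * x) (Ioo (0:ℝ) 1)) :
    IntegrableOn (fun x => w x ^ 2 / x) (Ioo (0:ℝ) 1) ∧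
    ∫ x in Ioo (0:ℝ) 1, w x ^ 2 / x ≤ (1 / β ^ 2) * (∫ x in Ioo (0:ℝ) 1, f x ^ 2 * x)
      + (8 + 8 / β) * ∫ x in Ioo (0:ℝ) 1, w x ^ 2 * x := by
  have hwc : ContinuousOn w (Ioo (0:ℝ) 1) :=
    fun x hx => (hw x hx).continuousAt.continuousWithinAt
  have hQi : IntegrableOn (fun x => (1 / β ^ 2) * (f x ^ 2 * x) + (4 + 8 / β) * (w x ^ 2 * x))
      (Ioo (0:ℝ) 1) := (hF.const_mul (1 / β ^ 2)).fun_add (hW.const_mul (4 + 8 / β))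
  obtain ⟨h1, h2⟩ := aux_core (fun x => w x ^ 2 / x)
    (fun x => (1 / β ^ 2) * (f x ^ 2 * x) + (4 + 8 / β) * (w x ^ 2 * x))
    (fun x => 4 * (w x ^ 2 * x)) (fun x => (4 / β) * (w x ^ 2 * (1 / 4 - x ^ 2)))
    (fun x => (4 / β) * ((2 * w x * (β / x * w x - f x)) * (1 / 4 - x ^ 2)
      + w x ^ 2 * (- (2 * x)))) 0
    ((hwc.pow 2).div continuousOn_id (fun x hx => hx.1.ne'))
    (fun x hx => div_nonneg (sq_nonneg _) hx.1.le)
    hQi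
    (fun x hx => by have := hx.1; positivity)
    (hW.const_mul 4)
    (fun x hx => by have := hx.1; positivity)
    (fun x hx => by
      exact ((aux_sq w _ x (hw x hx)).fun_mul ((aux_sqx x).const_sub (1/4))).const_mul (4 / β))
    (fun x hx => by
      have hx0 := hx.1
      have hp : 0 < 1 / 4 - x ^ 2 := by nlinarith [hx.1, hx.2]
      have key : (4 / β) * ((2 * w x * (β / x * w x - f x)) * (1 / 4 - x ^ 2)
          + w x ^ 2 * (- (2 * x))) - (w x ^ 2 / x - ((1 / β ^ 2) * (f x ^ 2 * x)
          + (4 + 8 / β) * (w x ^ 2 * x)))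
          = 4 * (1 / 4 - x ^ 2) / x * (w x - f x * x / β) ^ 2
            + 4 * x ^ 3 / β ^ 2 * f x ^ 2 := by
        field_simp
        ring
      have : 0 ≤ 4 * (1 / 4 - x ^ 2) / x * (w x - f x * x / β) ^ 2
            + 4 * x ^ 3 / β ^ 2 * f x ^ 2 := by positivity
      linarith)
    (fun a ha => by
      have hp : 0 < 1 / 4 - a ^ 2 := by nlinarith [ha.1, ha.2]
      have : 0 ≤ (4 / β) * (w a ^ 2 * (1 / 4 - a ^ 2)) := by positivity
      norm_num at this ⊢
      linarith)
    (fun x hx => by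
      have hx0 : 0 < x := lt_trans (by norm_num) hx.1
      rw [div_le_iff₀ hx0]
      have : 1 ≤ 4 * x ^ 2 := by nlinarith [hx.1]
      nlinarith [mul_le_mul_of_nonneg_left this (sq_nonneg (w x))])
  refine ⟨h1, h2.trans (le_of_eq ?_)⟩
  rw [integral_add (hF.const_mul _) (hW.const_mul _)]
  simp only [integral_const_mul]
  ring

lemma aux_u (α β : ℝ) (hβ : 0 < β) (hαβ : α = β + 1) (u w : ℝ → ℝ)
    (hwc : ContinuousOn w (Ioo (0:ℝ) 1))
    (hu : ∀ x ∈ Ioo (0:ℝ) 1, HasDerivAt u (w x - α / x * u x) x)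
    (hU : IntegrableOn (fun x => u x ^ 2 * x) (Ioo (0:ℝ) 1))
    (hK : IntegrableOn (fun x => w x ^ 2 / x) (Ioo (0:ℝ) 1)) :
    IntegrableOn (fun x => u x ^ 2 / x ^ 3) (Ioo (0:ℝ) 1) ∧
    ∫ x in Ioo (0:ℝ) 1, u x ^ 2 / x ^ 3 ≤
      (1 + 1 / (2 * β)) * (∫ x in Ioo (0:ℝ) 1, w x ^ 2 / x)
      + 16 * ∫ x in Ioo (0:ℝ) 1, u x ^ 2 * x := by
  have huc : ContinuousOn u (Ioo (0:ℝ) 1) :=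
    fun x hx => (hu x hx).continuousAt.continuousWithinAt
  set K := ∫ x in Ioo (0:ℝ) 1, w x ^ 2 / x with hKdef
  have hpt : ∀ y ∈ Ioo (0:ℝ) 1, u y ^ 2 * y ^ 2 ≤ y ^ 4 / (2 * β) * K := by
    intro y hy
    refine le_of_forall_pos_le_add fun c hc => ?_
    obtain ⟨a, ha, hac⟩ := aux_small u y hy hU c hc
    have hy0 := hy.1
    have h := aux_ftc (fun _ => 0) (fun x => y ^ 4 / (2 * β) * (w x ^ 2 / x))
      (fun x => - (u x ^ 2 * x ^ 2))
      (fun x => - ((2 * u x * (w x - α / x * u x)) * x ^ 2 + u x ^ 2 * (2 * x)))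
      a y ha.1 ha.2.le hy.2 continuousOn_const (hK.const_mul _)
      (fun x hx => by have := hx.1; positivity)
      (fun x hx => by
        exact ((aux_sq u _ x (hu x hx)).fun_mul (aux_sqx x)).fun_neg)
      (fun x hx => by
        have hx0 : 0 < x := ha.1.trans hx.1
        have hxy : x ^ 4 ≤ y ^ 4 := pow_le_pow_left₀ hx0.le hx.2.le 4
        have key : - ((2 * u x * (w x - α / x * u x)) * x ^ 2 + u x ^ 2 * (2 * x))
          + x ^ 4 / (2 * β) * (w x ^ 2 / x) = 2 * β * x * (u x - w x * x / (2 * β)) ^ 2 := by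
          rw [hαβ]
          field_simp
          ring
        have h0 : 0 ≤ 2 * β * x * (u x - w x * x / (2 * β)) ^ 2 := by positivity
        have h1 : x ^ 4 / (2 * β) * (w x ^ 2 / x) ≤ y ^ 4 / (2 * β) * (w x ^ 2 / x) := by
          gcongr
        linarith)
    rw [integral_const_mul] at h
    simp only [intervalIntegral.integral_zero] at h
    linarith
  obtain ⟨h1, h2⟩ := aux_core (fun x => u x ^ 2 / x ^ 3) (fun x => w x ^ 2 / x)
    (fun x => 16 * (u x ^ 2 * x)) (fun x => - (u x ^ 2 / x ^ 2))
    (fun x => - (((2 * u x * (w x - α / x * u x)) * x ^ 2 - u x ^ 2 * (2 * x)) / (x ^ 2) ^ 2))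
    (1 / (2 * β) * K)
    ((huc.pow 2).div (continuousOn_id.pow 3) (fun x hx => pow_ne_zero 3 hx.1.ne'))
    (fun x hx => by have := hx.1; positivity)
    hK
    (fun x hx => by have := hx.1; positivity)
    (hU.const_mul 16)
    (fun x hx => by have := hx.1; positivity)
    (fun x hx => by
      exact ((aux_sq u _ x (hu x hx)).fun_div (aux_sqx x) (pow_ne_zero 2 hx.1.ne')).fun_neg)
    (fun x hx => by
      have hx0 := hx.1
      have key : - (((2 * u x * (w x - α / x * u x)) * x ^ 2 - u x ^ 2 * (2 * x)) / (x ^ 2) ^ 2)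
        - (u x ^ 2 / x ^ 3 - w x ^ 2 / x)
        = (1 / x ^ 3) * (u x - w x * x) ^ 2 + (2 * β + 2) / x ^ 3 * u x ^ 2 := by
        rw [hαβ]
        field_simp
        ring
      have : 0 ≤ (1 / x ^ 3) * (u x - w x * x) ^ 2 + (2 * β + 2) / x ^ 3 * u x ^ 2 := by
        positivity
      linarith)
    (fun a ha => by
      have ha0 := ha.1
      have h := hpt a ⟨ha.1, ha.2.trans (by norm_num)⟩
      have h3 : u a ^ 2 / a ^ 2 ≤ 1 / (2 * β) * K := by
        rw [div_le_iff₀ (by positivity)]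
        have e : a ^ 4 / (2 * β) * K = (1 / (2 * β) * K * a ^ 2) * a ^ 2 := by
          ring
        have h' : u a ^ 2 * a ^ 2 ≤ (1 / (2 * β) * K * a ^ 2) * a ^ 2 := by
          rw [← e]; exact h
        exact le_of_mul_le_mul_right h' (by positivity)
      have h4 : 0 ≤ u (1/2) ^ 2 / (1/2:ℝ) ^ 2 := by positivity
      linarith)
    (fun x hx => by
      have hx0 : 0 < x := lt_trans (by norm_num) hx.1
      rw [div_le_iff₀ (by positivity)]
      have h4 : (1/2:ℝ) ^ 4 ≤ x ^ 4 := pow_le_pow_left₀ (by norm_num) hx.1.le 4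
      have : 1 ≤ 16 * x ^ 4 := by linarith
      nlinarith [mul_le_mul_of_nonneg_left this (sq_nonneg (u x))])
  refine ⟨h1, h2.trans (le_of_eq ?_)⟩
  rw [integral_const_mul]
  ring

lemma aux_int (φ : ℝ → ℝ) (hφ : ContinuousOn φ (Ioo (0:ℝ) 1)) (h : eL2x φ < ⊤) :
    IntegrableOn (fun x => φ x ^ 2 * x) (Ioo (0:ℝ) 1) := by
  refine ⟨((hφ.pow 2).mul continuousOn_id).aestronglyMeasurable measurableSet_Ioo, ?_⟩
  rw [hasFiniteIntegral_iff_ofReal]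
  · by_contra h'
    rw [not_lt, top_le_iff] at h'
    unfold eL2x at h
    rw [h', ENNReal.top_rpow_of_pos (by norm_num)] at h
    exact lt_irrefl _ h
  · refine (ae_restrict_iff' measurableSet_Ioo).2 (Filter.Eventually.of_forall fun x hx => ?_)
    exact mul_nonneg (sq_nonneg _) hx.1.le

lemma aux_sqrt (H : ℝ → ℝ) (hH : IntegrableOn H (Ioo (0:ℝ) 1))
    (h0 : ∀ x ∈ Ioo (0:ℝ) 1, 0 ≤ H x) :
    (∫⁻ x in Ioo (0:ℝ) 1, ENNReal.ofReal (H x)) ^ (1/2 : ℝ)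
      = ENNReal.ofReal (Real.sqrt (∫ x in Ioo (0:ℝ) 1, H x)) := by
  have h0' : ∀ᵐ x ∂(volume.restrict (Ioo (0:ℝ) 1)), 0 ≤ H x :=
    (ae_restrict_iff' measurableSet_Ioo).2 (Filter.Eventually.of_forall h0)
  rw [← ofReal_integral_eq_lintegral_ofReal hH h0',
    ENNReal.ofReal_rpow_of_nonneg (integral_nonneg_of_ae h0') (by norm_num), Real.sqrt_eq_rpow]

lemma aux_le (φ H : ℝ → ℝ) (U W F D : ℝ) (hU : 0 ≤ U) (hW : 0 ≤ W) (hF : 0 ≤ F) (hD : 0 ≤ D)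
    (hH : IntegrableOn H (Ioo (0:ℝ) 1))
    (hle : ∀ x ∈ Ioo (0:ℝ) 1, φ x ^ 2 * x ≤ H x)
    (hI : ∫ x in Ioo (0:ℝ) 1, H x ≤ D * (U + W + F)) :
    eL2x φ ≤ ENNReal.ofReal (Real.sqrt D * (Real.sqrt U + Real.sqrt W + Real.sqrt F)) := by
  have h0 : ∀ x ∈ Ioo (0:ℝ) 1, 0 ≤ H x :=
    fun x hx => (mul_nonneg (sq_nonneg _) hx.1.le).trans (hle x hx)
  calc eL2x φ ≤ (∫⁻ x in Ioo (0:ℝ) 1, ENNReal.ofReal (H x)) ^ (1/2 : ℝ) := by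
        unfold eL2x
        refine ENNReal.rpow_le_rpow ?_ (by norm_num)
        exact setLIntegral_mono' measurableSet_Ioo
          fun x hx => ENNReal.ofReal_le_ofReal (hle x hx)
    _ = ENNReal.ofReal (Real.sqrt (∫ x in Ioo (0:ℝ) 1, H x)) := aux_sqrt H hH h0
    _ ≤ _ := by
        refine ENNReal.ofReal_le_ofReal ?_
        refine (Real.sqrt_le_sqrt hI).trans ?_
        rw [Real.sqrt_mul hD]
        refine mul_le_mul_of_nonneg_left ?_ (Real.sqrt_nonneg _)
        rw [Real.sqrt_le_left (by positivity)]
        nlinarith [Real.sq_sqrt hU, Real.sq_sqrt hW, Real.sq_sqrt hF, Real.sqrt_nonneg U,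
          Real.sqrt_nonneg W, Real.sqrt_nonneg F,
          mul_nonneg (Real.sqrt_nonneg U) (Real.sqrt_nonneg W),
          mul_nonneg (Real.sqrt_nonneg U) (Real.sqrt_nonneg F),
          mul_nonneg (Real.sqrt_nonneg W) (Real.sqrt_nonneg F)]

set_option maxHeartbeats 2000000 in
/-- The `m = 2` case of the norm comparison: for `α > 1` there is `C = C(α) > 0` such that
for every `u ∈ C²((0,1))` with `u`, `D_{x,α}u` and `D*_{x,α}D_{x,α}u` in `L²_x`,
`‖x^{−2}u‖ + ‖x^{−1}u'‖ + ‖u''‖ ≤ C(‖u‖ + ‖D_{x,α}u‖ + ‖D*_{x,α}D_{x,α}u‖)`. -/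
theorem H2_alpha_bounds (α : ℝ) (hα : 1 < α) :
    ∃ C : ℝ, 0 < C ∧ ∀ u : ℝ → ℝ, ContDiffOn ℝ 2 u (Ioo (0:ℝ) 1) →
      eL2x u < ⊤ → eL2x (Dtw α u) < ⊤ → eL2x (Dstar α (Dtw α u)) < ⊤ →
      eL2x (fun x => u x / x ^ 2) + eL2x (fun x => deriv u x / x) + eL2x (deriv (deriv u))
        ≤ ENNReal.ofReal C *
            (eL2x u + eL2x (Dtw α u) + eL2x (Dstar α (Dtw α u))) := by
  obtain ⟨β, hαβ⟩ : ∃ β, α = β + 1 := ⟨α - 1, by ring⟩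
  have hβ : 0 < β := by linarith
  obtain ⟨CK, hCK⟩ : ∃ c, c = 1 / β ^ 2 + (8 + 8 / β) := ⟨_, rfl⟩
  obtain ⟨CV, hCV⟩ : ∃ c, c = (1 + 1 / (2 * β)) * CK + 16 := ⟨_, rfl⟩
  obtain ⟨C2, hC2⟩ : ∃ c, c = 2 * CK + 2 * α ^ 2 * CV := ⟨_, rfl⟩
  obtain ⟨C3, hC3⟩ : ∃ c, c = 4 * (1 + β ^ 2 * CK + α ^ 2 * C2 + α ^ 2 * CV) := ⟨_, rfl⟩
  have hCK0 : 0 < CK := by rw [hCK]; positivity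
  have hCV0 : 0 < CV := by rw [hCV]; positivity
  have hC20 : 0 < C2 := by rw [hC2]; positivity
  have hC30 : 0 < C3 := by rw [hC3]; positivity
  refine ⟨Real.sqrt CV + Real.sqrt C2 + Real.sqrt C3, by positivity, ?_⟩
  intro u hu2 hu hw hf
  have hd0 : ∀ x ∈ Ioo (0:ℝ) 1, DifferentiableAt ℝ u x := fun x hx =>
    (hu2.contDiffAt (isOpen_Ioo.mem_nhds hx)).differentiableAt (by norm_num)
  have hu1 : ContDiffOn ℝ 1 (deriv u) (Ioo (0:ℝ) 1) :=
    ((contDiffOn_succ_iff_deriv_of_isOpen (n := 1) isOpen_Ioo).1 (by rw [one_add_one_eq_two]; exact hu2)).2.2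
  have hd1 : ∀ x ∈ Ioo (0:ℝ) 1, DifferentiableAt ℝ (deriv u) x := fun x hx =>
    (hu1.contDiffAt (isOpen_Ioo.mem_nhds hx)).differentiableAt (by norm_num)
  have hc2 : ContinuousOn (deriv (deriv u)) (Ioo (0:ℝ) 1) :=
    hu1.continuousOn_deriv_of_isOpen isOpen_Ioo le_rfl
  have hc0 := hu2.continuousOn
  have hc1 := hu1.continuousOn
  have hdw : ∀ x ∈ Ioo (0:ℝ) 1, HasDerivAt (Dtw α u)
      (deriv (deriv u) x + (α / x * deriv u x - α / x ^ 2 * u x)) x := by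
    intro x hx
    have hx0 := hx.1
    have h1 : HasDerivAt (fun y : ℝ => α / y) (-(α / x ^ 2)) x := by
      have := (hasDerivAt_inv hx.1.ne').const_mul α
      simpa [div_eq_mul_inv] using this
    have h2 := (hd1 x hx).hasDerivAt.fun_add (h1.fun_mul (hd0 x hx).hasDerivAt)
    refine HasDerivAt.congr_deriv h2 ?_
    ring
  set w := Dtw α u with hwdef
  set f := Dstar α w with hfdef
  have hwx : ∀ x, w x = deriv u x + (α / x) * u x := fun x => rfl
  have hfx : ∀ x, f x = - deriv w x + (α - 1) / x * w x := fun x => rfl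
  have hinv : ∀ c : ℝ, ContinuousOn (fun x : ℝ => c / x) (Ioo (0:ℝ) 1) := fun c =>
    continuousOn_const.div continuousOn_id (fun x hx => hx.1.ne')
  have hwc : ContinuousOn w (Ioo (0:ℝ) 1) :=
    fun x hx => (hdw x hx).continuousAt.continuousWithinAt
  have hdwc : ContinuousOn (deriv w) (Ioo (0:ℝ) 1) := by
    have hA : ContinuousOn (fun x => deriv (deriv u) x
        + (α / x * deriv u x - α / x ^ 2 * u x)) (Ioo (0:ℝ) 1) := by
      refine hc2.add (((hinv α).mul hc1).sub (ContinuousOn.mul ?_ hc0))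
      exact continuousOn_const.div (continuousOn_id.pow 2) (fun x hx => pow_ne_zero 2 hx.1.ne')
    exact hA.congr fun x hx => (hdw x hx).deriv
  have hfc : ContinuousOn f (Ioo (0:ℝ) 1) := hdwc.neg.add ((hinv (α - 1)).mul hwc)
  have iU := aux_int u hc0 hu
  have iW := aux_int w hwc hw
  have iF := aux_int f hfc hf
  have nn : ∀ g : ℝ → ℝ, ∀ x ∈ Ioo (0:ℝ) 1, 0 ≤ g x ^ 2 * x :=
    fun g x hx => mul_nonneg (sq_nonneg _) hx.1.le
  have eU : eL2x u = _ := aux_sqrt _ iU (nn u)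
  have eW : eL2x w = _ := aux_sqrt _ iW (nn w)
  have eF : eL2x f = _ := aux_sqrt _ iF (nn f)
  have U0 := setIntegral_nonneg (μ := volume) measurableSet_Ioo (nn u)
  have W0 := setIntegral_nonneg (μ := volume) measurableSet_Ioo (nn w)
  have F0 := setIntegral_nonneg (μ := volume) measurableSet_Ioo (nn f)
  obtain ⟨iK, bK⟩ := aux_w β hβ w f (fun x hx => by
    refine (hdw x hx).congr_deriv ?_
    rw [hfx, (hdw x hx).deriv, hαβ]
    ring) iW iF
  obtain ⟨iV, bV⟩ := aux_u α β hβ hαβ u w hwc (fun x hx => by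
    refine (hd0 x hx).hasDerivAt.congr_deriv ?_
    rw [hwx]
    ring) iU iK
  rw [eU, eW, eF]
  set U := ∫ x in Ioo (0:ℝ) 1, u x ^ 2 * x
  set W := ∫ x in Ioo (0:ℝ) 1, w x ^ 2 * x
  set F := ∫ x in Ioo (0:ℝ) 1, f x ^ 2 * x
  set K := ∫ x in Ioo (0:ℝ) 1, w x ^ 2 / x
  set V := ∫ x in Ioo (0:ℝ) 1, u x ^ 2 / x ^ 3
  have bK' : K ≤ CK * (U + W + F) := by
    refine bK.trans ?_
    have h1 : 0 ≤ 1 / β ^ 2 := by positivity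
    have h2 : 0 ≤ 8 + 8 / β := by positivity
    rw [hCK]
    nlinarith [mul_nonneg h1 U0, mul_nonneg h1 W0, mul_nonneg h2 U0, mul_nonneg h2 F0]
  have bV' : V ≤ CV * (U + W + F) := by
    refine bV.trans ?_
    have h1 : 0 ≤ 1 + 1 / (2 * β) := by positivity
    rw [hCV]
    nlinarith [mul_le_mul_of_nonneg_left bK' h1]
  have iH2 : IntegrableOn (fun x => 2 * (w x ^ 2 / x) + 2 * α ^ 2 * (u x ^ 2 / x ^ 3))
      (Ioo (0:ℝ) 1) := (iK.const_mul 2).fun_add (iV.const_mul (2 * α ^ 2))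
  have bH2 : ∫ x in Ioo (0:ℝ) 1, (2 * (w x ^ 2 / x) + 2 * α ^ 2 * (u x ^ 2 / x ^ 3))
      ≤ C2 * (U + W + F) := by
    rw [integral_add (iK.const_mul 2) (iV.const_mul (2 * α ^ 2)), integral_const_mul,
      integral_const_mul, hC2]
    have h1 : 0 ≤ 2 * α ^ 2 := by positivity
    nlinarith [mul_le_mul_of_nonneg_left bV' h1]
  have hle2 : ∀ x ∈ Ioo (0:ℝ) 1, (deriv u x / x) ^ 2 * x
      ≤ 2 * (w x ^ 2 / x) + 2 * α ^ 2 * (u x ^ 2 / x ^ 3) := by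
    intro x hx
    have hx0 := hx.1
    have key : 2 * (w x ^ 2 / x) + 2 * α ^ 2 * (u x ^ 2 / x ^ 3) - (deriv u x / x) ^ 2 * x
        = (w x + α / x * u x) ^ 2 / x := by
      rw [hwx]
      field_simp
      ring
    have : 0 ≤ (w x + α / x * u x) ^ 2 / x := by positivity
    linarith
  have B1 := aux_le (fun x => u x / x ^ 2) (fun x => u x ^ 2 / x ^ 3) U W F CV U0 W0 F0 hCV0.le
    iV (fun x hx => by
      have hx0 := hx.1
      refine le_of_eq ?_
      field_simp) bV'
  have B2 := aux_le (fun x => deriv u x / x) _ U W F C2 U0 W0 F0 hC20.le iH2 hle2 bH2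
  have B3 := aux_le (deriv (deriv u))
    (fun x => 4 * (f x ^ 2 * x) + 4 * β ^ 2 * (w x ^ 2 / x)
      + 4 * α ^ 2 * (2 * (w x ^ 2 / x) + 2 * α ^ 2 * (u x ^ 2 / x ^ 3))
      + 4 * α ^ 2 * (u x ^ 2 / x ^ 3)) U W F C3 U0 W0 F0 hC30.le
    ((((iF.const_mul 4).fun_add (iK.const_mul (4 * β ^ 2))).fun_add
      (iH2.const_mul (4 * α ^ 2))).fun_add (iV.const_mul (4 * α ^ 2)))
    (fun x hx => by
      have hx0 := hx.1
      have h2 := mul_le_mul_of_nonneg_left (hle2 x hx) (by positivity : 0 ≤ 4 * α ^ 2)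
      have e : deriv (deriv u) x = - f x + β / x * w x + (- (α / x * deriv u x))
          + α / x ^ 2 * u x := by
        rw [hfx, (hdw x hx).deriv, hαβ]
        ring
      have q : ∀ a b c d : ℝ, (a + b + c + d) ^ 2 ≤ 4 * a ^ 2 + 4 * b ^ 2 + 4 * c ^ 2
          + 4 * d ^ 2 := fun a b c d => by
        nlinarith [sq_nonneg (a - b), sq_nonneg (a - c), sq_nonneg (a - d), sq_nonneg (b - c),
          sq_nonneg (b - d), sq_nonneg (c - d)]
      rw [e]
      refine (mul_le_mul_of_nonneg_right (q _ _ _ _) hx0.le).trans ?_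
      have e2 : (4 * (- f x) ^ 2 + 4 * (β / x * w x) ^ 2 + 4 * (- (α / x * deriv u x)) ^ 2
          + 4 * (α / x ^ 2 * u x) ^ 2) * x = 4 * (f x ^ 2 * x) + 4 * β ^ 2 * (w x ^ 2 / x)
          + 4 * α ^ 2 * ((deriv u x / x) ^ 2 * x) + 4 * α ^ 2 * (u x ^ 2 / x ^ 3) := by
        field_simp
      rw [e2]
      linarith)
    (by
      rw [integral_add (((iF.const_mul 4).fun_add (iK.const_mul (4 * β ^ 2))).fun_add
          (iH2.const_mul (4 * α ^ 2))) (iV.const_mul (4 * α ^ 2)),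
        integral_add ((iF.const_mul 4).fun_add (iK.const_mul (4 * β ^ 2)))
          (iH2.const_mul (4 * α ^ 2)),
        integral_add (iF.const_mul 4) (iK.const_mul (4 * β ^ 2)),
        integral_const_mul, integral_const_mul, integral_const_mul, integral_const_mul, hC3]
      have h1 := mul_le_mul_of_nonneg_left bK' (by positivity : 0 ≤ 4 * β ^ 2)
      have h2 := mul_le_mul_of_nonneg_left bH2 (by positivity : 0 ≤ 4 * α ^ 2)
      have h3 := mul_le_mul_of_nonneg_left bV' (by positivity : 0 ≤ 4 * α ^ 2)
      nlinarith [h1, h2, h3])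
  refine (add_le_add (add_le_add B1 B2) B3).trans (le_of_eq ?_)
  rw [← ENNReal.ofReal_add (by positivity) (by positivity),
    ← ENNReal.ofReal_add (by positivity) (by positivity),
    ← ENNReal.ofReal_add (by positivity) (by positivity),
    ← ENNReal.ofReal_add (by positivity) (by positivity),
    ← ENNReal.ofReal_mul (by positivity)]
  congr 1
  ring
end
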